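/- Let 2 ≤ k ≤ n and 0 ≤ l ≤ k−2, and define G_l(λ) = −σ_l(λ)/σ_{k−1}(λ) on Γ_{k−1}. Then for every λ ∈ Γ_{k−1} and every ξ ∈ ℝ^n, the second derivatives of G_l satisfy Σ_{p,q=1}^n (∂²G_l/∂λ_p∂λ_q)(λ) ξ_p ξ_q ≤ (1 + 1/(k−l−1)) · G_l(λ)^{−1} · ( Σ_{p=1}^n (∂G_l/∂λ_p)(λ) ξ_p )². -/

import Mathlib

open Finset

/-- The `k`-th elementary symmetric function of `lam : Fin n → ℝ`. -/
noncomputable def esymm (n k : ℕ) (lam : Fin n → ℝ) : ℝ :=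
  ∑ s ∈ Finset.powersetCard k (Finset.univ : Finset (Fin n)), ∏ i ∈ s, lam i

/-- The Gårding cone `Γ_k ⊆ ℝ^n`. -/
def GammaCone (n k : ℕ) : Set (Fin n → ℝ) :=
  {lam | ∀ i : ℕ, 1 ≤ i → i ≤ k → 0 < esymm n i lam}

/-- `G_l(λ) = -σ_l(λ)/σ_{k-1}(λ)`. -/
noncomputable def Gmix (n k l : ℕ) (lam : Fin n → ℝ) : ℝ :=
  -(esymm n l lam / esymm n (k-1) lam)

/-- The `k`-th elementary symmetric function of `f` restricted to `S`. -/
def esymmOn {ι : Type*} (S : Finset ι) (k : ℕ) (f : ι → ℝ) : ℝ :=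
  ∑ s ∈ S.powersetCard k, ∏ i ∈ s, f i

section Algebra

variable {ι : Type*}

@[simp] lemma esymmOn_zero (S : Finset ι) (f : ι → ℝ) : esymmOn S 0 f = 1 := by
  simp [esymmOn]

@[simp] lemma esymmOn_empty_succ (k : ℕ) (f : ι → ℝ) : esymmOn ∅ (k + 1) f = 0 := by
  rw [esymmOn, powersetCard_eq_empty.2 (by simp), sum_empty]

lemma esymmOn_smul (S : Finset ι) (k : ℕ) (c : ℝ) (f : ι → ℝ) :
    esymmOn S k (c • f) = c ^ k * esymmOn S k f := by
  unfold esymmOn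
  rw [mul_sum]
  refine sum_congr rfl fun s hs => ?_
  simp [prod_mul_distrib, (mem_powersetCard.1 hs).2]

variable [DecidableEq ι]

lemma esymmOn_insert {S : Finset ι} {a : ι} (ha : a ∉ S) (k : ℕ) (f : ι → ℝ) :
    esymmOn (insert a S) (k + 1) f = esymmOn S (k + 1) f + f a * esymmOn S k f := by
  unfold esymmOn
  have hmem : ∀ s ∈ S.powersetCard k, a ∉ s := fun s hs h => ha ((mem_powersetCard.1 hs).1 h)
  rw [powersetCard_succ_insert ha, sum_union, sum_image, mul_sum]
  · congr 1
    exact sum_congr rfl fun s hs => prod_insert (hmem s hs)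
  · intro s hs t ht hst
    rw [← erase_insert (hmem s hs), ← erase_insert (hmem t ht), hst]
  · rw [disjoint_left]
    intro s hs hs'
    obtain ⟨t, -, rfl⟩ := mem_image.1 hs'
    exact ha ((mem_powersetCard.1 hs).1 (mem_insert_self a t))

lemma esymmOn_erase {S : Finset ι} {a : ι} (ha : a ∈ S) (k : ℕ) (f : ι → ℝ) :
    esymmOn S (k + 1) f = esymmOn (S.erase a) (k + 1) f + f a * esymmOn (S.erase a) k f := by
  rw [← esymmOn_insert (notMem_erase a S), insert_erase ha]

lemma sum_mul_esymmOn_erase (S : Finset ι) (k : ℕ) (f : ι → ℝ) :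
    ∑ i ∈ S, f i * esymmOn (S.erase i) k f = (k + 1) * esymmOn S (k + 1) f := by
  induction S using Finset.induction_on generalizing k with
  | empty => simp
  | insert a S ha ih =>
    have herase : ∀ i ∈ S, (insert a S).erase i = insert a (S.erase i) := fun i hi =>
      erase_insert_of_ne fun h => ha (h ▸ hi)
    rw [sum_insert ha, erase_insert ha, esymmOn_insert ha]
    cases k with
    | zero =>
      have := ih 0
      simp only [esymmOn_zero] at this ⊢
      rw [this]; push_cast; ring
    | succ k =>
      have : ∑ i ∈ S, f i * esymmOn ((insert a S).erase i) (k + 1) f =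
          ∑ i ∈ S, f i * esymmOn (S.erase i) (k + 1) f +
            f a * ∑ i ∈ S, f i * esymmOn (S.erase i) k f := by
        rw [mul_sum, ← sum_add_distrib]
        refine sum_congr rfl fun i hi => ?_
        rw [herase i hi, esymmOn_insert (fun h => ha (mem_of_mem_erase h))]
        ring
      rw [this, ih, ih]
      push_cast
      ring

open Polynomial in
lemma coeff_prod_one_add_mul_X (S : Finset ι) (k : ℕ) (f : ι → ℝ) :
    (∏ i ∈ S, (1 + C (f i) * X)).coeff k = esymmOn S k f := by
  induction S using Finset.induction_on generalizing k with
  | empty => cases k <;> simp [coeff_one]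
  | insert a S ha ih =>
    rw [prod_insert ha, add_mul, one_mul, mul_assoc, coeff_add, coeff_C_mul]
    cases k with
    | zero => simp [ih]
    | succ k => rw [coeff_X_mul, ih, ih, esymmOn_insert ha]

end Algebra

namespace Polynomial

lemma Splits.derivative_of_real {p : ℝ[X]} (hp : p.Splits) : p.derivative.Splits := by
  rw [splits_iff_card_roots] at hp ⊢
  have h1 := card_roots_le_derivative p
  have h2 := p.derivative.card_roots'
  have h3 := natDegree_derivative_le p
  omega

lemma Splits.two_mul_coeff_zero_mul_coeff_two_le {p : ℝ[X]} (hp : p.Splits) :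
    2 * (p.coeff 0 * p.coeff 2) ≤ p.coeff 1 ^ 2 := by
  obtain ⟨m, hm⟩ := splits_iff_exists_multiset.1 hp
  generalize p.leadingCoeff = a at hm
  subst hm
  clear hp
  induction m using Multiset.induction_on with
  | empty => simp [coeff_C]
  | cons c m ih =>
    rw [Multiset.map_cons, Multiset.prod_cons, mul_left_comm (C a)]
    generalize C a * (m.map fun x => X - C x).prod = q at ih ⊢
    have h (k : ℕ) : ((X - C c) * q).coeff (k + 1) = q.coeff k - c * q.coeff (k + 1) := by
      rw [sub_mul, coeff_sub, coeff_X_mul, coeff_C_mul]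
    have h0 : ((X - C c) * q).coeff 0 = - (c * q.coeff 0) := by simp [mul_coeff_zero]
    rw [h0, h 0, h 1]
    nlinarith [sq_nonneg (q.coeff 0), mul_nonneg (sq_nonneg c) (sub_nonneg.2 ih)]

/-- Newton's inequality for real-rooted polynomials, without the factor depending on the degree. -/
lemma Splits.factorial_mul_coeff_le {p : ℝ[X]} (hp : p.Splits) (m : ℕ) :
    (m.factorial * p.coeff m) * ((m + 2).factorial * p.coeff (m + 2)) ≤
      ((m + 1).factorial * p.coeff (m + 1)) ^ 2 := by
  induction m generalizing p with
  | zero =>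
    have := hp.two_mul_coeff_zero_mul_coeff_two_le
    simp [Nat.factorial]
    linarith
  | succ m ih =>
    have := ih hp.derivative_of_real
    simp only [coeff_derivative] at this
    simp only [Nat.factorial_succ] at this ⊢
    push_cast at this ⊢
    convert this using 1 <;> ring_nf

lemma Splits.coeff_mul_coeff_le {p : ℝ[X]} (hp : p.Splits) (m : ℕ) :
    p.coeff m * p.coeff (m + 2) ≤ p.coeff (m + 1) ^ 2 := by
  rcases le_total (p.coeff m * p.coeff (m + 2)) 0 with h | h
  · exact h.trans (sq_nonneg _)
  have hN := hp.factorial_mul_coeff_le m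
  have hm : (0 : ℝ) < m.factorial := by positivity
  simp only [Nat.factorial_succ] at hN
  push_cast at hN
  have key : ((m : ℝ) + 2) * (p.coeff m * p.coeff (m + 2)) ≤ (m + 1) * p.coeff (m + 1) ^ 2 := by
    have hpos : (0 : ℝ) < m.factorial ^ 2 * (m + 1) := by positivity
    refine le_of_mul_le_mul_left ?_ hpos
    linarith
  have hm1 : (0 : ℝ) < (m : ℝ) + 1 := by positivity
  refine le_of_mul_le_mul_left ?_ hm1
  linarith

end Polynomial

section Cone

variable {ι : Type*} [DecidableEq ι]

open Polynomial in
lemma esymmOn_mul_esymmOn_le_sq (S : Finset ι) (k : ℕ) (f : ι → ℝ) :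
    esymmOn S k f * esymmOn S (k + 2) f ≤ esymmOn S (k + 1) f ^ 2 := by
  simp only [← coeff_prod_one_add_mul_X]
  refine Splits.coeff_mul_coeff_le (Splits.prod fun i _ => Splits.of_natDegree_le_one ?_) k
  compute_degree

lemma esymmOn_erase_pos {S : Finset ι} {f : ι → ℝ} {k : ℕ}
    (hf : ∀ j ≤ k + 1, 0 < esymmOn S j f) {a : ι} (ha : a ∈ S) :
    ∀ j ≤ k, 0 < esymmOn (S.erase a) j f := by
  intro j
  induction j with
  | zero => simp
  | succ j ih =>
    intro hj
    have h0 := ih (by omega)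
    have h1 := hf (j + 1) (by omega)
    have h2 := hf (j + 2) (by omega)
    rw [esymmOn_erase ha] at h1 h2
    have hN := esymmOn_mul_esymmOn_le_sq (S.erase a) j f
    by_contra! hneg
    have hfa : 0 < f a := by
      by_contra! h
      nlinarith
    nlinarith

lemma add_sq_div_le {x y s t r : ℝ} (hs : 0 < s) (ht : 0 < t) (hr : s + t ≤ r) :
    (x + y) ^ 2 / r ≤ x ^ 2 / s + y ^ 2 / t := by
  have h := sq_sum_div_le_sum_sq_div (univ : Finset (Fin 2)) ![x, y] (g := ![s, t])
    (by simp [Fin.forall_fin_two, hs, ht])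
  simp only [Fin.sum_univ_two, Matrix.cons_val_zero, Matrix.cons_val_one] at h
  exact (div_le_div_of_nonneg_left (sq_nonneg _) (by positivity) hr).trans h

lemma succ_mul_esymmOn_div {S : Finset ι} {f : ι → ℝ} {k : ℕ}
    (hk : 0 < esymmOn S (k + 1) f) :
    ((k : ℝ) + 2) * (esymmOn S (k + 2) f / esymmOn S (k + 1) f) =
      ∑ i ∈ S, (f i - f i ^ 2 / (esymmOn S (k + 1) f / esymmOn (S.erase i) k f)) := by
  have := sum_mul_esymmOn_erase S (k + 1) f
  push_cast at this
  rw [← mul_div_assoc, show (k : ℝ) + 2 = k + 1 + 1 by ring, ← this, sum_div]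
  refine sum_congr rfl fun i hi => ?_
  have h := esymmOn_erase hi k f
  rw [div_div_eq_mul_div, eq_sub_iff_add_eq, ← add_div, div_eq_iff hk.ne', h]
  ring

/-- Superadditivity of `σ_{k+1} / σ_k` on the Gårding cone, which is closed under addition. -/
lemma esymmOn_add_superadditive (k : ℕ) (S : Finset ι) {f g : ι → ℝ}
    (hf : ∀ j ≤ k + 1, 0 < esymmOn S j f) (hg : ∀ j ≤ k + 1, 0 < esymmOn S j g) :
    (∀ j ≤ k + 1, 0 < esymmOn S j (f + g)) ∧
      esymmOn S (k + 1) f / esymmOn S k f + esymmOn S (k + 1) g / esymmOn S k g ≤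
        esymmOn S (k + 1) (f + g) / esymmOn S k (f + g) := by
  induction k generalizing S with
  | zero =>
    have h1 (h : ι → ℝ) : esymmOn S 1 h = ∑ i ∈ S, h i := by
      have := sum_mul_esymmOn_erase S 0 h
      simpa using this.symm
    have hadd : esymmOn S 1 (f + g) = esymmOn S 1 f + esymmOn S 1 g := by
      simp [h1, sum_add_distrib]
    refine ⟨fun j hj => ?_, by simp [hadd]⟩
    interval_cases j
    · simp
    · rw [hadd]
      exact add_pos (hf 1 le_rfl) (hg 1 le_rfl)
  | succ k ih =>
    obtain ⟨hpos, -⟩ := ih S (fun j hj => hf j (by omega)) (fun j hj => hg j (by omega))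
    have hq : esymmOn S (k + 2) f / esymmOn S (k + 1) f +
        esymmOn S (k + 2) g / esymmOn S (k + 1) g ≤
        esymmOn S (k + 2) (f + g) / esymmOn S (k + 1) (f + g) := by
      have hk : (0 : ℝ) < (k : ℝ) + 2 := by positivity
      refine le_of_mul_le_mul_left ?_ hk
      rw [mul_add, succ_mul_esymmOn_div (hf (k + 1) (by omega)),
        succ_mul_esymmOn_div (hg (k + 1) (by omega)), succ_mul_esymmOn_div (hpos (k + 1) le_rfl),
        ← sum_add_distrib]
      refine sum_le_sum fun i hi => ?_
      have hfi := esymmOn_erase_pos hf hi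
      have hgi := esymmOn_erase_pos hg hi
      obtain ⟨hpi, hqi⟩ := ih (S.erase i) hfi hgi
      have hs (h : ι → ℝ) (hh : 0 < esymmOn (S.erase i) k h) :
          esymmOn S (k + 1) h / esymmOn (S.erase i) k h =
            esymmOn (S.erase i) (k + 1) h / esymmOn (S.erase i) k h + h i := by
        rw [esymmOn_erase hi, add_div, mul_div_cancel_right₀ _ hh.ne']
      have := add_sq_div_le (x := f i) (y := g i)
        (r := esymmOn S (k + 1) (f + g) / esymmOn (S.erase i) k (f + g))
        (div_pos (hf (k + 1) (by omega)) (hfi k (by omega)))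
        (div_pos (hg (k + 1) (by omega)) (hgi k (by omega)))
        (by rw [hs _ (hfi k (by omega)), hs _ (hgi k (by omega)), hs _ (hpi k (by omega)),
              Pi.add_apply]
            linarith)
      rw [Pi.add_apply]
      linarith
    refine ⟨fun j hj => ?_, hq⟩
    rcases Nat.lt_or_eq_of_le hj with hj | rfl
    · exact hpos j (by omega)
    · have h1 := div_pos (hf (k + 2) le_rfl) (hf (k + 1) (by omega))
      have h2 := div_pos (hg (k + 2) le_rfl) (hg (k + 1) (by omega))
      exact (div_pos_iff_of_pos_right (hpos (k + 1) le_rfl)).1 ((add_pos h1 h2).trans_le hq)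

end Cone

section Calculus

lemma deriv_deriv_nonpos_of_concaveOn_ball {f : ℝ → ℝ} {x ε : ℝ} (hε : 0 < ε)
    (hf : ConcaveOn ℝ (Metric.ball x ε) f) (hd : ∀ y ∈ Metric.ball x ε, DifferentiableAt ℝ f y) :
    deriv (deriv f) x ≤ 0 := by
  rw [← derivWithin_of_mem_nhds (Metric.ball_mem_nhds x hε)]
  exact (hf.antitoneOn_deriv hd).derivWithin_nonpos

lemma ContDiffAt.differentiableAt_deriv {f : ℝ → ℝ} {x : ℝ} (hf : ContDiffAt ℝ 2 f x) :
    DifferentiableAt ℝ (deriv f) x :=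
  (((hf.fderiv_right (m := 1) (by norm_num)).differentiableAt (by norm_num)).clm_apply
    (differentiableAt_const (1 : ℝ))).congr_of_eventuallyEq
      (.of_forall fun _ => fderiv_apply_one_eq_deriv.symm)

/-- If `P` is a product of `d` positive functions with nonpositive second derivative, then
`P ^ (1 / d)` has nonpositive second derivative; this is stated in terms of `-P⁻¹`. -/
lemma deriv_deriv_neg_inv_prod_le {ι : Type*} {s : Finset ι} (hs : s.Nonempty) {q : ι → ℝ → ℝ}
    {x : ℝ} (hq : ∀ i ∈ s, ContDiffAt ℝ 2 (q i) x) (hpos : ∀ i ∈ s, 0 < q i x)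
    (hconc : ∀ i ∈ s, deriv (deriv (q i)) x ≤ 0) :
    deriv (deriv fun t => -(∏ i ∈ s, q i t)⁻¹) x ≤
      (1 + 1 / (#s : ℝ)) * (-(∏ i ∈ s, q i x)⁻¹)⁻¹ *
        (deriv (fun t => -(∏ i ∈ s, q i t)⁻¹) x) ^ 2 := by
  set h : ℝ → ℝ := fun t => -(∏ i ∈ s, q i t)⁻¹ with hh
  set L : ℝ → ℝ := fun t => ∑ i ∈ s, deriv (q i) t / q i t with hL
  have hev : ∀ᶠ t in nhds x, ∀ i ∈ s, DifferentiableAt ℝ (q i) t ∧ 0 < q i t := by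
    rw [Filter.eventually_all_finset]
    intro i hi
    have h1 := ((hq i hi).eventually (by simp)).mono
      fun t ht => ht.differentiableAt (by norm_num)
    exact h1.and ((hq i hi).continuousAt.eventually_const_lt (hpos i hi))
  have hder : ∀ᶠ t in nhds x, HasDerivAt h (-(h t * L t)) t := by
    filter_upwards [hev] with t ht
    have hP : ∏ i ∈ s, q i t ≠ 0 := prod_ne_zero_iff.2 fun i hi => (ht i hi).2.ne'
    have hPd : DifferentiableAt ℝ (fun t => ∏ i ∈ s, q i t) t :=
      DifferentiableAt.fun_finsetProd fun i hi => (ht i hi).1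
    have hlog := logDeriv_prod (s := s) (f := q) (x := t) (fun i hi => (ht i hi).2.ne')
      (fun i hi => (ht i hi).1)
    simp only [logDeriv_apply] at hlog
    rw [div_eq_iff hP] at hlog
    refine (hPd.hasDerivAt.fun_inv hP).fun_neg.congr_deriv ?_
    rw [hlog, hh, hL]
    field_simp
  have hd1 : deriv h =ᶠ[nhds x] fun t => -(h t * L t) := hder.mono fun t ht => ht.deriv
  have hLd : HasDerivAt L
      (∑ i ∈ s, (deriv (deriv (q i)) x / q i x - (deriv (q i) x / q i x) ^ 2)) x := by
    refine HasDerivAt.fun_sum fun i hi => ?_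
    have h1 : HasDerivAt (q i) (deriv (q i) x) x :=
      ((hq i hi).differentiableAt (by norm_num)).hasDerivAt
    have h2 : HasDerivAt (deriv (q i)) (deriv (deriv (q i)) x) x :=
      (hq i hi).differentiableAt_deriv.hasDerivAt
    refine (h2.fun_div h1 (hpos i hi).ne').congr_deriv ?_
    have := (hpos i hi).ne'
    field_simp
  have hcs : L x ^ 2 / #s ≤ ∑ i ∈ s, (deriv (q i) x / q i x) ^ 2 := by
    have hc : (0 : ℝ) < #s := by exact_mod_cast hs.card_pos
    rw [div_le_iff₀ hc, mul_comm]
    exact sq_sum_le_card_mul_sum_sq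
  have hL' : ∑ i ∈ s, (deriv (deriv (q i)) x / q i x - (deriv (q i) x / q i x) ^ 2) ≤
      -(L x ^ 2 / #s) := by
    refine le_trans ?_ (neg_le_neg hcs)
    rw [← sum_neg_distrib]
    refine sum_le_sum fun i hi => ?_
    have := div_nonpos_of_nonpos_of_nonneg (hconc i hi) (hpos i hi).le
    linarith
  have hneg : h x < 0 := neg_lt_zero.2 (inv_pos.2 (prod_pos hpos))
  rw [hd1.deriv_eq, (hder.self_of_nhds.fun_mul hLd).fun_neg.deriv, hder.self_of_nhds.deriv]
  change _ ≤ (1 + 1 / (#s : ℝ)) * (h x)⁻¹ * _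
  have e : (1 + 1 / (#s : ℝ)) * (h x)⁻¹ * (-(h x * L x)) ^ 2 =
      h x * L x ^ 2 + h x * (L x ^ 2 / #s) := by
    have := hneg.ne
    field_simp
  rw [e]
  nlinarith [mul_le_mul_of_nonpos_left hL' hneg.le]

lemma sum_apply_single_mul {ι : Type*} [Fintype ι] [DecidableEq ι] (L : (ι → ℝ) →L[ℝ] ℝ)
    (ξ : ι → ℝ) : ∑ p, L (Pi.single p 1) * ξ p = L ξ := by
  conv_rhs => rw [← L.coe_coe, LinearMap.pi_apply_eq_sum_univ]
  refine sum_congr rfl fun p _ => ?_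
  rw [smul_eq_mul, mul_comm, L.coe_coe]
  congr 2
  ext i
  simp [Pi.single_apply, eq_comm]

lemma sum_sum_fderiv_fderiv_single {ι : Type*} [Fintype ι] [DecidableEq ι] {F : (ι → ℝ) → ℝ}
    {x : ι → ℝ} (hF : ContDiffAt ℝ 2 F x) (ξ : ι → ℝ) :
    ∑ p, ∑ q, fderiv ℝ (fun y => fderiv ℝ F y (Pi.single p 1)) x (Pi.single q 1) * ξ p * ξ q =
      deriv (deriv fun t : ℝ => F (x + t • ξ)) 0 := by
  have hline (t : ℝ) : HasDerivAt (fun t : ℝ => x + t • ξ) ξ t := by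
    simpa using ((hasDerivAt_id t).smul_const ξ).const_add x
  have htend : Filter.Tendsto (fun t : ℝ => x + t • ξ) (nhds 0) (nhds x) := by
    simpa using (hline 0).continuousAt.tendsto
  have hd : DifferentiableAt ℝ (fderiv ℝ F) x :=
    (hF.fderiv_right (m := 1) (by norm_num)).differentiableAt (by norm_num)
  have hev : deriv (fun t : ℝ => F (x + t • ξ)) =ᶠ[nhds 0] fun t => fderiv ℝ F (x + t • ξ) ξ := by
    filter_upwards [htend.eventually (hF.eventually (by simp))] with t ht
    exact ((ht.differentiableAt (by norm_num)).hasFDerivAt.comp_hasDerivAt t (hline t)).deriv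
  have hd0 : HasFDerivAt (fderiv ℝ F) (fderiv ℝ (fderiv ℝ F) x) (x + (0 : ℝ) • ξ) := by
    simpa using hd.hasFDerivAt
  have h1 : HasDerivAt (fun t : ℝ => fderiv ℝ F (x + t • ξ)) (fderiv ℝ (fderiv ℝ F) x ξ) 0 :=
    hd0.comp_hasDerivAt (0 : ℝ) (hline 0)
  have h2 : HasDerivAt (fun t : ℝ => fderiv ℝ F (x + t • ξ) ξ) (fderiv ℝ (fderiv ℝ F) x ξ ξ) 0 :=
    (h1.clm_apply (hasDerivAt_const (0 : ℝ) ξ)).congr_deriv (by rw [map_zero, add_zero])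
  rw [hev.deriv_eq, h2.deriv, ← sum_apply_single_mul (fderiv ℝ (fderiv ℝ F) x ξ)]
  refine sum_congr rfl fun p _ => ?_
  have h3 : fderiv ℝ (fun y => fderiv ℝ F y (Pi.single p 1)) x =
      (fderiv ℝ (fderiv ℝ F) x).flip (Pi.single p 1) := by
    ext v
    simp [fderiv_clm_apply hd (differentiableAt_const _)]
  rw [h3, ← ContinuousLinearMap.flip_apply, ← sum_apply_single_mul, sum_mul]
  exact sum_congr rfl fun q _ => by ring

lemma sum_fderiv_single_eq_deriv {ι : Type*} [Fintype ι] [DecidableEq ι] {F : (ι → ℝ) → ℝ}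
    {x : ι → ℝ} (hF : DifferentiableAt ℝ F x) (ξ : ι → ℝ) :
    ∑ p, fderiv ℝ F x (Pi.single p 1) * ξ p = deriv (fun t : ℝ => F (x + t • ξ)) 0 := by
  have hline : HasDerivAt (fun t : ℝ => x + t • ξ) ξ 0 := by
    simpa using ((hasDerivAt_id (0 : ℝ)).smul_const ξ).const_add x
  have h0 : HasFDerivAt F (fderiv ℝ F x) (x + (0 : ℝ) • ξ) := by simpa using hF.hasFDerivAt
  rw [sum_apply_single_mul]
  exact (h0.comp_hasDerivAt 0 hline).deriv.symm

lemma contDiff_esymmOn {ι : Type*} [Fintype ι] (S : Finset ι) (k : ℕ) :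
    ContDiff ℝ 2 (esymmOn S k) := by
  unfold esymmOn
  fun_prop

end Calculus

section Line

variable {ι : Type*}

lemma esymmOn_div_smul_add_smul_le [DecidableEq ι] {S : Finset ι} {k m : ℕ} (hk : k < m)
    {f g : ι → ℝ} (hf : ∀ j ≤ m, 0 < esymmOn S j f) (hg : ∀ j ≤ m, 0 < esymmOn S j g) {a b : ℝ}
    (ha : 0 < a) (hb : 0 < b) :
    a * (esymmOn S (k + 1) f / esymmOn S k f) + b * (esymmOn S (k + 1) g / esymmOn S k g) ≤
      esymmOn S (k + 1) (a • f + b • g) / esymmOn S k (a • f + b • g) := by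
  have hpos {c : ℝ} (hc : 0 < c) {h : ι → ℝ} (hh : ∀ j ≤ m, 0 < esymmOn S j h) :
      ∀ j ≤ k + 1, 0 < esymmOn S j (c • h) := fun j hj => by
    rw [esymmOn_smul]
    exact mul_pos (pow_pos hc j) (hh j (by omega))
  have hdiv {c : ℝ} (hc : 0 < c) (h : ι → ℝ) : esymmOn S (k + 1) (c • h) / esymmOn S k (c • h) =
      c * (esymmOn S (k + 1) h / esymmOn S k h) := by
    rw [esymmOn_smul, esymmOn_smul, pow_succ, mul_assoc, mul_div_mul_left _ _ (pow_pos hc k).ne',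
      mul_div_assoc]
  rw [← hdiv ha, ← hdiv hb]
  exact (esymmOn_add_superadditive k S (hpos ha hf) (hpos hb hg)).2

lemma eventually_esymmOn_pos [Fintype ι] {S : Finset ι} {m : ℕ} {x : ι → ℝ}
    (hx : ∀ j ≤ m, 0 < esymmOn S j x) (ξ : ι → ℝ) :
    ∀ᶠ t : ℝ in nhds 0, ∀ j ≤ m, 0 < esymmOn S j (x + t • ξ) := by
  have h (j) (hj : j ∈ range (m + 1)) : ∀ᶠ t : ℝ in nhds 0, 0 < esymmOn S j (x + t • ξ) := by
    have hc : Continuous fun t : ℝ => esymmOn S j (x + t • ξ) :=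
      (contDiff_esymmOn S j).continuous.comp (by fun_prop)
    have hj' : j ≤ m := Nat.lt_succ_iff.1 (mem_range.1 hj)
    exact hc.continuousAt.eventually_const_lt (by simpa using hx j hj')
  filter_upwards [(Filter.eventually_all_finset _).2 h] with t ht j hj
  exact ht j (mem_range.2 (Nat.lt_succ_of_le hj))

lemma contDiffAt_esymmOn_line_div [Fintype ι] {S : Finset ι} {k l : ℕ} {x ξ : ι → ℝ} {t : ℝ}
    (h : 0 < esymmOn S l (x + t • ξ)) :
    ContDiffAt ℝ 2 (fun t : ℝ => esymmOn S k (x + t • ξ) / esymmOn S l (x + t • ξ)) t := by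
  have hline : ContDiff ℝ 2 fun t : ℝ => x + t • ξ := by fun_prop
  exact ((contDiff_esymmOn S k).comp hline).contDiffAt.div
    ((contDiff_esymmOn S l).comp hline).contDiffAt h.ne'

lemma deriv_deriv_esymmOn_div_nonpos [Fintype ι] [DecidableEq ι] {S : Finset ι} {k m : ℕ} (hk : k < m)
    {x : ι → ℝ} (hx : ∀ j ≤ m, 0 < esymmOn S j x) (ξ : ι → ℝ) :
    deriv (deriv fun t : ℝ => esymmOn S (k + 1) (x + t • ξ) / esymmOn S k (x + t • ξ)) 0 ≤ 0 := by
  obtain ⟨ε, hε, hball⟩ := Metric.eventually_nhds_iff_ball.1 (eventually_esymmOn_pos hx ξ)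
  refine deriv_deriv_nonpos_of_concaveOn_ball hε ?_ fun t ht =>
    (contDiffAt_esymmOn_line_div (hball t ht k hk.le)).differentiableAt (by norm_num)
  refine concaveOn_iff_forall_pos.2 ⟨convex_ball 0 ε, fun s hs t ht a b ha hb hab => ?_⟩
  have hcomb : x + (a • s + b • t) • ξ = a • (x + s • ξ) + b • (x + t • ξ) := by
    have : x = (a + b) • x := by rw [hab, one_smul]
    nth_rewrite 1 [this]
    module
  rw [hcomb]
  exact esymmOn_div_smul_add_smul_le hk (hball s hs) (hball t ht) ha hb

lemma prod_range_esymmOn_div (S : Finset ι) (l d : ℕ) {x : ι → ℝ}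
    (hx : ∀ j ≤ l + d, 0 < esymmOn S j x) :
    ∏ i ∈ range d, esymmOn S (l + i + 1) x / esymmOn S (l + i) x =
      esymmOn S (l + d) x / esymmOn S l x := by
  induction d with
  | zero => simp [(hx l (by omega)).ne']
  | succ d ih =>
    rw [prod_range_succ, ih fun j hj => hx j (by omega), mul_comm,
      div_mul_div_cancel₀ (hx (l + d) (by omega)).ne', add_assoc]

end Line

/-- Second-derivative estimate for `G_l = -σ_l/σ_{k-1}`:
`∑_{p,q} (∂²G_l/∂λ_p∂λ_q) ξ_p ξ_q ≤ (1 + 1/(k-l-1)) G_l⁻¹ (∑_p (∂G_l/∂λ_p) ξ_p)²`. -/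
theorem Gmix_second_deriv_estimate (n k l : ℕ) (hk2 : 2 ≤ k) (hkn : k ≤ n)
    (hl : l ≤ k - 2) (lam : Fin n → ℝ) (hlam : lam ∈ GammaCone n (k-1))
    (ξ : Fin n → ℝ) :
    ∑ p : Fin n, ∑ q : Fin n,
        fderiv ℝ (fun x => fderiv ℝ (Gmix n k l) x (Pi.single p 1)) lam
            (Pi.single q 1) * ξ p * ξ q
      ≤ (1 + 1 / ((k : ℝ) - (l : ℝ) - 1)) * (Gmix n k l lam)⁻¹ *
          (∑ p : Fin n, fderiv ℝ (Gmix n k l) lam (Pi.single p 1) * ξ p) ^ 2 := by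
  obtain ⟨d, rfl⟩ : ∃ d, k = l + (d + 1) + 1 := ⟨k - l - 2, by omega⟩
  have hpos : ∀ j ≤ l + (d + 1), 0 < esymmOn univ j lam := by
    intro j hj
    rcases Nat.eq_zero_or_pos j with rfl | h
    · simp
    · exact hlam j h hj
  have hG : Gmix n (l + (d + 1) + 1) l =
      fun x => -(esymmOn univ l x / esymmOn univ (l + (d + 1)) x) := rfl
  have hCD : ContDiffAt ℝ 2 (Gmix n (l + (d + 1) + 1) l) lam := by
    rw [hG]
    exact ((contDiff_esymmOn _ _).contDiffAt.div (contDiff_esymmOn _ _).contDiffAt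
      (hpos _ le_rfl).ne').neg
  rw [sum_sum_fderiv_fderiv_single hCD,
    sum_fderiv_single_eq_deriv (hCD.differentiableAt (by norm_num))]
  have hline : (fun t : ℝ => Gmix n (l + (d + 1) + 1) l (lam + t • ξ)) =ᶠ[nhds 0] fun t =>
      -(∏ i ∈ range (d + 1), esymmOn univ (l + i + 1) (lam + t • ξ) /
        esymmOn univ (l + i) (lam + t • ξ))⁻¹ := by
    filter_upwards [eventually_esymmOn_pos hpos ξ] with t ht
    rw [prod_range_esymmOn_div _ _ _ ht, inv_div, hG]
  have hval : Gmix n (l + (d + 1) + 1) l lam = -(∏ i ∈ range (d + 1),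
      esymmOn univ (l + i + 1) (lam + (0 : ℝ) • ξ) / esymmOn univ (l + i) (lam + (0 : ℝ) • ξ))⁻¹ := by
    simpa using hline.self_of_nhds
  have hcast : ((l + (d + 1) + 1 : ℕ) : ℝ) - l - 1 = (#(range (d + 1)) : ℝ) := by
    rw [card_range]
    push_cast
    ring
  rw [hline.deriv.deriv_eq, hline.deriv_eq, hval, hcast]
  have hlt {i : ℕ} (hi : i ∈ range (d + 1)) : l + i < l + (d + 1) := by
    simpa using hi
  refine deriv_deriv_neg_inv_prod_le ⟨0, by simp⟩ (fun i hi => ?_) (fun i hi => ?_) fun i hi => ?_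
  · exact contDiffAt_esymmOn_line_div (by simpa using hpos _ (hlt hi).le)
  · simpa using div_pos (hpos _ (hlt hi)) (hpos _ (hlt hi).le)
  · exact deriv_deriv_esymmOn_div_nonpos (hlt hi) hpos ξ
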